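/- Ξ_N = {w ∈ X_ℂ : there exists ξ ∈ Hor(X) with w·ξ = 1}; that is, a point w of the complex hyperboloid X_ℂ lies in the G-saturation of the complexified horospherical orbit N_ℂ·x₀ if and only if w pairs to 1 with some real null vector ξ with ξ₀ > 0. -/

import Mathlib

open Matrix

/-- The Lorentz form `diag(1,-1,-1)`. -/
noncomputable def eta3 : Matrix (Fin 3) (Fin 3) ℝ := Matrix.diagonal ![1, -1, -1]

/-- `G = SO_e(1,2)`. -/
noncomputable def Gso : Set (Matrix (Fin 3) (Fin 3) ℝ) :=
  {g | gᵀ * eta3 * g = eta3 ∧ g.det = 1 ∧ 0 < g 0 0}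

/-- Action of a real matrix on `ℂ³`. -/
noncomputable def act (g : Matrix (Fin 3) (Fin 3) ℝ) (z : Fin 3 → ℂ) : Fin 3 → ℂ :=
  (g.map (fun x : ℝ => (x : ℂ))).mulVec z

/-- `Q(z) = z₀² - z₁² - z₂²` on `ℂ³`. -/
def Qc (z : Fin 3 → ℂ) : ℂ := z 0 ^ 2 - z 1 ^ 2 - z 2 ^ 2

/-- `Q(y) = y₀² - y₁² - y₂²` on `ℝ³`. -/
def Qr (y : Fin 3 → ℝ) : ℝ := y 0 ^ 2 - y 1 ^ 2 - y 2 ^ 2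

/-- The unipotent matrices `n_z`. -/
noncomputable def nmat (z : ℂ) : Matrix (Fin 3) (Fin 3) ℂ :=
  !![1 + z ^ 2 / 2, z, -(z ^ 2) / 2;
     z, 1, -z;
     z ^ 2 / 2, z, 1 - z ^ 2 / 2]

/-- The base point `x₀ = (1,0,0)`. -/
def x0c : Fin 3 → ℂ := ![1, 0, 0]

/-- `Ξ_N = G·N_ℂ·x₀`. -/
noncomputable def XiN : Set (Fin 3 → ℂ) :=
  {w | ∃ g ∈ Gso, ∃ z : ℂ, w = act g ((nmat z).mulVec x0c)}

/-- The horocycle space `Hor(X) = {ξ ∈ ℝ³ : Q(ξ) = 0, ξ₀ > 0}`. -/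
def Hor : Set (Fin 3 → ℝ) := {ξ | Qr ξ = 0 ∧ 0 < ξ 0}

/-- `Ξ_N = {w ∈ X_ℂ : ∃ ξ ∈ Hor(X), w·ξ = 1}`. -/
theorem stmt_7 :
    XiN = {w : Fin 3 → ℂ | Qc w = 1 ∧ ∃ ξ ∈ Hor,
      w 0 * (ξ 0 : ℂ) - w 1 * (ξ 1 : ℂ) - w 2 * (ξ 2 : ℂ) = 1} := by
  ext w
  simp only [XiN, Set.mem_setOf_eq]
  constructor
  · rintro ⟨g, ⟨hg, hd, h0⟩, z, rfl⟩
    have hg' : g * eta3 * gᵀ = eta3 := by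
      have hee : eta3 * eta3 = 1 := by
        ext i j
        fin_cases i <;> fin_cases j <;> simp [eta3]
      have h1 : (eta3 * gᵀ * eta3) * g = 1 := by
        rw [← hee, Matrix.mul_assoc eta3, Matrix.mul_assoc eta3, hg]
      have h2 : g * (eta3 * gᵀ * eta3) = 1 := mul_eq_one_comm.mp h1
      calc g * eta3 * gᵀ = g * (eta3 * gᵀ * eta3) * eta3 := by
            simp only [Matrix.mul_assoc, hee, Matrix.mul_one]
        _ = eta3 := by rw [h2, Matrix.one_mul]
    have e : ∀ i j, (gᵀ * eta3 * g) i j = eta3 i j := fun i j => by rw [hg]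
    have r00 : (g * eta3 * gᵀ) 0 0 = eta3 0 0 := by rw [hg']
    have e00 := e 0 0
    have e01 := e 0 1
    have e02 := e 0 2
    have e11 := e 1 1
    have e12 := e 1 2
    have e22 := e 2 2
    simp [eta3, Matrix.mul_apply, Fin.sum_univ_three, Matrix.diagonal_apply] at r00 e00 e01 e02 e11 e12 e22
    have c00 := congrArg (fun x : ℝ => (x : ℂ)) e00
    have c01 := congrArg (fun x : ℝ => (x : ℂ)) e01
    have c02 := congrArg (fun x : ℝ => (x : ℂ)) e02
    have c11 := congrArg (fun x : ℝ => (x : ℂ)) e11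
    have c12 := congrArg (fun x : ℝ => (x : ℂ)) e12
    have c22 := congrArg (fun x : ℝ => (x : ℂ)) e22
    push_cast at c00 c01 c02 c11 c12 c22
    refine ⟨?_, ![g 0 0 + g 0 2, g 1 0 + g 1 2, g 2 0 + g 2 2], ⟨?_, ?_⟩, ?_⟩
    · simp [Qc, act, nmat, x0c, Matrix.mulVec, dotProduct, Fin.sum_univ_three]
      linear_combination (1+z^2/2)^2 * c00 + z^2 * c11 + (z^2/2)^2 * c22 + 2*(1+z^2/2)*z*c01 + 2*(1+z^2/2)*(z^2/2)*c02 + 2*z*(z^2/2)*c12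
    · simp [Qr]
      linear_combination e00 + 2 * e02 + e22
    · simp
      have : |g 0 2| < |g 0 0| := by
        apply sq_lt_sq.mp
        nlinarith [sq_nonneg (g 0 1)]
      rw [abs_of_pos h0] at this
      linarith [(abs_lt.mp this).1]
    · simp [act, nmat, x0c, Matrix.mulVec, dotProduct, Fin.sum_univ_three]
      linear_combination (1+z^2/2) * c00 + (1+z^2/2)*c02 + z*c01 + z*c12 + (z^2/2)*c02 + (z^2/2)*c22
  · rintro ⟨hQ, ξ, ⟨hξ, hr⟩, hp⟩
    obtain ⟨r, hrd⟩ : ∃ r, r = ξ 0 := ⟨_, rfl⟩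
    obtain ⟨t, ht⟩ : ∃ t, t = r⁻¹ := ⟨_, rfl⟩
    rw [← hrd] at hr hp
    have hrt : r * t = 1 := by rw [ht]; exact mul_inv_cancel₀ hr.ne'
    have htp : 0 < t := by rw [ht]; exact inv_pos.mpr hr
    obtain ⟨u, hu⟩ : ∃ u, u = ξ 1 * t := ⟨_, rfl⟩
    obtain ⟨v, hv⟩ : ∃ v, v = ξ 2 * t := ⟨_, rfl⟩
    have h1 : ξ 1 = r * u := by rw [hu]; linear_combination -ξ 1 * hrt
    have h2 : ξ 2 = r * v := by rw [hv]; linear_combination -ξ 2 * hrt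
    simp only [Qr] at hξ
    rw [← hrd, h1, h2] at hξ
    have huv : u^2 + v^2 = 1 := by
      linear_combination -t^2 * hξ + (1 - u^2 - v^2) * (r*t+1) * hrt
    rw [h1, h2] at hp
    push_cast at hp
    simp only [Qc] at hQ
    have cuv : (u:ℂ)^2 + (v:ℂ)^2 = 1 := by exact_mod_cast huv
    have crt : (r:ℂ) * (t:ℂ) = 1 := by exact_mod_cast hrt
    have hP : w 0 - (u * w 1 + v * w 2) = (t:ℂ) := by
      linear_combination (t:ℂ) * hp - (w 0 - (u * w 1 + v * w 2)) * crt
    have hz : ((v:ℂ) * w 1 - u * w 2)^2 = 2 * w 0 * t - 1 - (t:ℂ)^2 := by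
      linear_combination (w 1^2 + w 2^2) * cuv - hQ + (w 0 + (u * w 1 + v * w 2) - t) * hP - 0 * hP
    clear hQ hp
    have hz2 : (r:ℂ) * ((v:ℂ) * w 1 - u * w 2)^2 / 2 = w 0 - (r + t)/2 := by
      linear_combination (r:ℂ)/2 * hz + (w 0 - t/2) * crt
    refine ⟨!![(r+t)/2, 0, (r-t)/2; u*((r-t)/2), v, u*((r+t)/2); v*((r-t)/2), -u, v*((r+t)/2)], ⟨?_, ?_, ?_⟩, v * w 1 - u * w 2, ?_⟩
    · ext i j
      fin_cases i <;> fin_cases j <;> simp [eta3, Matrix.mul_apply, Fin.sum_univ_three, Matrix.diagonal_apply]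
      · linear_combination hrt - ((r-t)/2)^2 * huv
      · ring
      · linear_combination - ((r-t)/2)*((r+t)/2) * huv
      · ring
      · linear_combination -huv
      · ring
      · linear_combination - ((r-t)/2)*((r+t)/2) * huv
      · ring
      · linear_combination -hrt - ((r+t)/2)^2 * huv
    · simp [Matrix.det_fin_three]
      linear_combination r*t*huv + hrt
    · simp; linarith
    · ext i
      fin_cases i <;> simp [act, nmat, x0c, Matrix.mulVec, dotProduct, Fin.sum_univ_three]
      · linear_combination -hz2
      · linear_combination -(u:ℂ) * hz2 - u * hP - w 1 * cuv
      · linear_combination -(v:ℂ) * hz2 - v * hP - w 2 * cuv
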